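/- For every σ > 0 and q ∈ (0,1], the Kullback–Leibler divergence between the Gaussian N(q, σ²) and the mixture q·N(1, σ²) + (1−q)·N(0, σ²) satisfies KL(N(q,σ²), q·N(1,σ²) + (1−q)·N(0,σ²)) = E_{x∼N(0,1)}[f_x(1/σ)]. -/

import Mathlib

open MeasureTheory ProbabilityTheory Real

/-- The standard normal density `φ(t) = (2π)^{−1/2}·e^{−t²/2}`. -/
noncomputable def stdphi (t : ℝ) : ℝ := (Real.sqrt (2 * π))⁻¹ * Real.exp (-t ^ 2 / 2)

/-- `f_x(u) = ln( φ(x) / ( q·φ(x − (1−q)u) + (1−q)·φ(x + qu) ) )`. -/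
noncomputable def fX (q x u : ℝ) : ℝ :=
  Real.log (stdphi x / (q * stdphi (x - (1 - q) * u) + (1 - q) * stdphi (x + q * u)))

/-!
The map `x ↦ σ * x + q` carries `N(0, 1)` to `N(q, σ²)` and turns the density of every `N(m, σ²)`
into a translate of `φ`, up to the factor `|σ|⁻¹`. That factor does not depend on `m`, so it cancels
in the density ratio, and the divergence becomes an integral against `N(0, 1)`.
-/

lemma gaussianReal_map_affine (μ : ℝ) (v : NNReal) (a b : ℝ) :
    (gaussianReal μ v).map (fun x ↦ a * x + b) =
      gaussianReal (a * μ + b) ((a ^ 2).toNNReal * v) := by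
  calc (gaussianReal μ v).map (fun x ↦ a * x + b)
      = ((gaussianReal μ v).map (fun x ↦ a * x)).map (fun x ↦ x + b) :=
        (Measure.map_map (measurable_add_const b) (measurable_const_mul a)).symm
    _ = gaussianReal (a * μ + b) ((a ^ 2).toNNReal * v) := by
        rw [gaussianReal_map_const_mul, gaussianReal_map_add_const,
          Real.toNNReal_of_nonneg (sq_nonneg a)]

lemma integral_gaussianReal_eq_integral_standard {E : Type*} [NormedAddCommGroup E]
    [NormedSpace ℝ E] {σ : ℝ} (hσ : σ ≠ 0) (m : ℝ) (g : ℝ → E) :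
    ∫ t, g t ∂(gaussianReal m (σ ^ 2).toNNReal) = ∫ x, g (σ * x + m) ∂(gaussianReal 0 1) := by
  have h_emb : MeasurableEmbedding (fun x ↦ σ * x + m) :=
    (measurableEmbedding_addRight m).comp (measurableEmbedding_mulLeft₀ hσ)
  have h_law : (gaussianReal 0 1).map (fun x ↦ σ * x + m) = gaussianReal m (σ ^ 2).toNNReal := by
    rw [gaussianReal_map_affine, mul_zero, zero_add, mul_one]
  rw [← h_law, h_emb.integral_map]

lemma gaussianPDFReal_affine {σ : ℝ} (hσ : σ ≠ 0) (m c x : ℝ) :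
    gaussianPDFReal c (σ ^ 2).toNNReal (σ * x + m) = |σ|⁻¹ * stdphi (x + (m - c) / σ) := by
  have h_norm : √(2 * π * σ ^ 2) = √(2 * π) * |σ| := by
    rw [Real.sqrt_mul (by positivity), Real.sqrt_sq_eq_abs]
  have h_exponent : -(σ * x + m - c) ^ 2 / (2 * σ ^ 2) = -(x + (m - c) / σ) ^ 2 / 2 := by
    field_simp
    ring
  rw [gaussianPDFReal, stdphi, Real.coe_toNNReal _ (sq_nonneg σ), h_norm, h_exponent]
  ring

lemma gaussianPDFReal_div_linear_combination_affine {σ : ℝ} (hσ : σ ≠ 0) (m a b v w x : ℝ) :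
    gaussianPDFReal m (σ ^ 2).toNNReal (σ * x + m) /
        (v * gaussianPDFReal a (σ ^ 2).toNNReal (σ * x + m)
          + w * gaussianPDFReal b (σ ^ 2).toNNReal (σ * x + m)) =
      stdphi x / (v * stdphi (x + (m - a) / σ) + w * stdphi (x + (m - b) / σ)) := by
  simp only [gaussianPDFReal_affine hσ, sub_self, zero_div, add_zero, mul_left_comm _ |σ|⁻¹,
    ← mul_add]
  exact mul_div_mul_left _ _ (inv_ne_zero (abs_ne_zero.mpr hσ))

/-- For `q ∈ [0, 1]` and real-valued `F` the left side is the `f`-divergence of `N(q, σ²)` from the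
mixture with `f s = s * F s`; the Kullback–Leibler divergence is `F = Real.log`. -/
theorem kl_gaussian_mixture_eq_integral_fX_general {E : Type*} [NormedAddCommGroup E]
    [NormedSpace ℝ E] (F : ℝ → E) {σ : ℝ} (hσ : σ ≠ 0) (q : ℝ) :
    ∫ t, F (gaussianPDFReal q (σ ^ 2).toNNReal t /
          (q * gaussianPDFReal 1 (σ ^ 2).toNNReal t
            + (1 - q) * gaussianPDFReal 0 (σ ^ 2).toNNReal t))
        ∂(gaussianReal q (σ ^ 2).toNNReal) =
      ∫ x, F (stdphi x /
          (q * stdphi (x - (1 - q) * (1 / σ)) + (1 - q) * stdphi (x + q * (1 / σ))))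
        ∂(gaussianReal 0 1) := by
  have h_shift_one (x : ℝ) : x + (q - 1) / σ = x - (1 - q) * (1 / σ) := by ring
  have h_shift_zero (x : ℝ) : x + (q - 0) / σ = x + q * (1 / σ) := by ring
  rw [integral_gaussianReal_eq_integral_standard hσ]
  simp only [gaussianPDFReal_div_linear_combination_affine hσ, h_shift_one, h_shift_zero]

/-- The KL divergence `KL(N(q,σ²), q·N(1,σ²) + (1−q)·N(0,σ²))`, written as the integral of
the log-density ratio against `N(q,σ²)`, equals `E_{x∼N(0,1)}[f_x(1/σ)]`. -/
theorem kl_gaussian_mixture_eq_integral_fX (σ q : ℝ) (hσ : 0 < σ)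
    (hq : q ∈ Set.Ioc (0 : ℝ) 1) :
    (∫ t, Real.log (gaussianPDFReal q (σ ^ 2).toNNReal t /
          (q * gaussianPDFReal 1 (σ ^ 2).toNNReal t
            + (1 - q) * gaussianPDFReal 0 (σ ^ 2).toNNReal t))
        ∂(gaussianReal q (σ ^ 2).toNNReal)) =
      ∫ x, fX q x (1 / σ) ∂(gaussianReal 0 1) :=
  kl_gaussian_mixture_eq_integral_fX_general Real.log hσ.ne' q
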